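/- Let 𝔥 and ℋ be separable complex Hilbert spaces, 𝔖 and 𝔰 bounded self-adjoint operators on ℋ, g ∈ 𝔥, and (V_τ)_{τ∈ℝ} a strongly continuous one-parameter group of unitary operators on 𝔥. For z ∈ 𝔥 set α_τ(z) = 2 Re⟨z, V_τ g⟩ and 𝔰(τ) = e^{iτ𝔖} 𝔰 e^{−iτ𝔖}, and let Ũ_{t,s}(z) be the propagator generated by τ ↦ α_τ(z)𝔰(τ). Let (μ, γ) be a state-valued measure on 𝔥 with ∫_𝔥 ‖z‖ dμ(z) < ∞, and define γ_t(z) := Ũ_{t,0}(z) γ(z) Ũ_{t,0}(z)* for t ∈ ℝ. Then for every t, s ∈ ℝ and every η ∈ 𝔥, the maps z ↦ e^{2i Re⟨η,z⟩} γ_t(z) and (τ, z) ↦ [γ_τ(z), 𝔰(τ)] α_τ(z) e^{2i Re⟨η,z⟩} are Bochner integrable (in trace norm) against μ and against dμ(z)dτ on [s,t] × 𝔥 respectively, and the transport equation holds: ∫_𝔥 e^{2i Re⟨η,z⟩} γ_t(z) dμ(z) − ∫_𝔥 e^{2i Re⟨η,z⟩} γ_s(z) dμ(z) = i ∫_s^t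 ( ∫_𝔥 [γ_τ(z), 𝔰(τ)] α_τ(z) e^{2i Re⟨η,z⟩} dμ(z) ) dτ. -/

import Mathlib

noncomputable section
open MeasureTheory Complex
open scoped InnerProductSpace

variable {ℋ : Type*} [NormedAddCommGroup ℋ] [InnerProductSpace ℂ ℋ] [CompleteSpace ℋ]

/-- The trace norm `‖T‖₁ = tr √(T*T)` computed in the Hilbert basis `e`. -/
def traceNorm {ι : Type*} (e : HilbertBasis ι ℂ ℋ) (T : ℋ →L[ℂ] ℋ) : ℝ :=
  ∑' i, (⟪e i, (CFC.sqrt (star T * T)) (e i)⟫_ℂ).re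

/-- `T` is trace class: `tr √(T*T) < ∞`. -/
def IsTraceClass {ι : Type*} (e : HilbertBasis ι ℂ ℋ) (T : ℋ →L[ℂ] ℋ) : Prop :=
  Summable fun i => (⟪e i, (CFC.sqrt (star T * T)) (e i)⟫_ℂ).re

/-- A state-valued measure: a finite Borel measure `μ` on `𝔥` together with a trace-norm
Bochner integrable map `γ` whose values are `μ`-a.e. positive trace-one operators on `ℋ`. -/
def IsStateValuedMeasure {𝔥 : Type*} [NormedAddCommGroup 𝔥] [InnerProductSpace ℂ 𝔥]
    [MeasurableSpace 𝔥] {ι : Type*} (e : HilbertBasis ι ℂ ℋ)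
    (μ : Measure 𝔥) (γ : 𝔥 → (ℋ →L[ℂ] ℋ)) : Prop :=
  IsFiniteMeasure μ ∧ Integrable γ μ ∧ Integrable (fun z => traceNorm e (γ z)) μ ∧
  (∀ᵐ z ∂μ, (γ z).IsPositive) ∧
  (∀ᵐ z ∂μ, HasSum (fun i => (⟪e i, γ z (e i)⟫_ℂ).re) 1)

/-- The Fourier transform `𝔪̂(η) = ∫ e^{2i Re⟨η,z⟩} γ(z) dμ(z)` of a state-valued measure. -/
def svmFourier {𝔥 : Type*} [NormedAddCommGroup 𝔥] [InnerProductSpace ℂ 𝔥]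
    [MeasurableSpace 𝔥] (μ : Measure 𝔥) (γ : 𝔥 → (ℋ →L[ℂ] ℋ)) (η : 𝔥) : ℋ →L[ℂ] ℋ :=
  ∫ z, Complex.exp (2 * Complex.I * ((⟪η, z⟫_ℂ).re : ℂ)) • γ z ∂μ

/-- `U` is a norm-continuous (in the first time variable) solution of the Duhamel integral
equation `U t s = 1 - i ∫_s^t H τ * U τ s dτ` (Bochner integral in `B(ℋ)`). -/
def IsPropagator (H : ℝ → (ℋ →L[ℂ] ℋ)) (U : ℝ → ℝ → (ℋ →L[ℂ] ℋ)) : Prop :=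
  (∀ s : ℝ, Continuous fun t => U t s) ∧
  ∀ s t : ℝ, U t s = 1 - Complex.I • ∫ τ in s..t, (H τ) * (U τ s)

/-- The interaction-picture spin operator `𝔰(τ) = e^{iτ𝔖} 𝔰 e^{-iτ𝔖}`. -/
def sTau (𝔖 𝔰 : ℋ →L[ℂ] ℋ) (τ : ℝ) : ℋ →L[ℂ] ℋ :=
  NormedSpace.exp ((Complex.I * τ) • 𝔖) * 𝔰 * NormedSpace.exp ((-(Complex.I * τ)) • 𝔖)

/-- The evolved density `γ_t(z) = Ũ_{t,0}(z) γ(z) Ũ_{t,0}(z)*`. -/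
def gammaT {𝔥 : Type*} (U : 𝔥 → ℝ → ℝ → (ℋ →L[ℂ] ℋ)) (γ : 𝔥 → (ℋ →L[ℂ] ℋ))
    (t : ℝ) (z : 𝔥) : ℋ →L[ℂ] ℋ :=
  U z t 0 * γ z * star (U z t 0)

/-!
For fixed `z`, differentiating the Duhamel equation gives the von Neumann equation
`∂_τ γ_τ(z) = i [γ_τ(z), α_τ(z) 𝔰(τ)]`. Multiplying by `e^{2i Re⟨η,z⟩}`, integrating over
`[s, t]` and over `μ`, and exchanging the integrals by Fubini yields the transport equation.

The majorants for Fubini are `‖U γ U*‖₁ ≤ ‖γ‖₁` and `‖[γ, H]‖₁ ≤ 2 ‖H‖ ‖γ‖₁`, where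
`‖α_τ(z) 𝔰(τ)‖` grows at most linearly in `z`. Both come from the characterization of `‖T‖₁` as the
supremum of `∑ᵢ |⟨eᵢ, X T eᵢ⟩|` over contractions `X`; the contractions `T (|T| + ε)⁻¹` replace the
partial isometry of the polar decomposition.

Measurability in `z` follows from continuous dependence of the propagator on its generator: for
isometries `‖U₁ - U₂‖² ≤ 2 ‖U₁* U₂ - 1‖`, and `∂_t (U₁* U₂) = i U₁* (H₁ - H₂) U₂`.
-/

section Orthonormal

variable {𝕜 E ι : Type*} [RCLike 𝕜] [NormedAddCommGroup E] [InnerProductSpace 𝕜 E]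

lemma norm_sub_sq_of_orthonormal {v : ι → E} (hv : Orthonormal 𝕜 v) {i j : ι} (hij : i ≠ j) :
    ‖v i - v j‖ ^ 2 = 2 := by
  rw [norm_sub_sq (𝕜 := 𝕜), hv.norm_eq_one, hv.norm_eq_one, hv.inner_eq_zero hij]
  norm_num

lemma countable_of_orthonormal [TopologicalSpace.SeparableSpace E] {v : ι → E}
    (hv : Orthonormal 𝕜 v) : Countable ι := by
  refine Pairwise.countable_of_isOpen_disjoint (s := fun i ↦ Metric.ball (v i) (1 / 2))
    (fun i j hij ↦ Metric.ball_disjoint_ball ?_) (fun _ ↦ Metric.isOpen_ball)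
    (fun i ↦ ⟨v i, Metric.mem_ball_self (by norm_num)⟩)
  rw [dist_eq_norm]
  nlinarith [norm_sub_sq_of_orthonormal hv hij, norm_nonneg (v i - v j)]

lemma tsum_enorm_inner_sq (e : HilbertBasis ι 𝕜 E) (x : E) :
    ∑' i, ‖⟪e i, x⟫_𝕜‖ₑ ^ 2 = ‖x‖ₑ ^ 2 := by
  have hnorm : HasSum (fun i ↦ ‖⟪e i, x⟫_𝕜‖ ^ 2) (‖x‖ ^ 2) := by
    rw [← RCLike.hasSum_ofReal 𝕜]
    convert e.hasSum_inner_mul_inner x x using 1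
    · funext i
      rw [← inner_conj_symm x (e i), RCLike.conj_mul, RCLike.ofReal_pow]
    · rw [inner_self_eq_norm_sq_to_K, RCLike.ofReal_pow]
  simp_rw [← ofReal_norm, ← ENNReal.ofReal_pow (norm_nonneg _)]
  rw [← hnorm.tsum_eq, ENNReal.ofReal_tsum_of_nonneg (fun _ ↦ by positivity) hnorm.summable]

end Orthonormal

section ApproximatePolarDecomposition

variable {A : Type*} [CStarAlgebra A] [PartialOrder A] [StarOrderedRing A]

lemma norm_abs_mul (a b : A) : ‖CFC.abs a * b‖ = ‖a * b‖ := by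
  rw [← sq_eq_sq₀ (norm_nonneg _) (norm_nonneg _), sq, sq, ← CStarRing.norm_star_mul_self,
    ← CStarRing.norm_star_mul_self, star_mul, star_mul, (CFC.abs_nonneg a).star_eq]
  simp only [mul_assoc]
  rw [← mul_assoc (CFC.abs a), CFC.abs_mul_abs, mul_assoc]

lemma exists_norm_regularized_inv_mul_le {p : A} (hp : 0 ≤ p) {ε : ℝ} (hε : 0 < ε) :
    ∃ r : A, IsSelfAdjoint r ∧ ‖p * r‖ ≤ 1 ∧ ‖p - r * p * p‖ ≤ ε ∧ ‖p * (1 - r * p)‖ ≤ ε := by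
  set f : ℝ → ℝ := fun x ↦ (|x| + ε)⁻¹
  have hf : Continuous f := by
    refine Continuous.inv₀ (by fun_prop) fun x ↦ ?_
    positivity
  have hmul (g : ℝ → ℝ) (hg : Continuous g) : cfc g p * p = cfc (fun x ↦ g x * x) p := by
    rw [cfc_mul g (fun x ↦ x) p hg.continuousOn continuousOn_id, cfc_id' ℝ p]
  have hcomm : p * cfc f p = cfc f p * p := by
    simpa only [cfc_id ℝ p] using (cfc_commute_cfc id f p).eq
  have hnonneg {x : ℝ} (hx : x ∈ spectrum ℝ p) : 0 ≤ x := spectrum_nonneg_of_nonneg hp hx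
  have hdefect : ‖p - cfc f p * p * p‖ ≤ ε := by
    nth_rewrite 1 [← cfc_id' ℝ p]
    rw [hmul f hf, hmul _ (by fun_prop), ← cfc_sub _ _ p (by fun_prop) (by fun_prop)]
    refine norm_cfc_le hε.le fun x hx ↦ ?_
    have hx' := hnonneg hx
    have : x - f x * x * x = ε * (x / (x + ε)) := by
      simp only [f, abs_of_nonneg hx']
      field_simp
      ring
    rw [this, Real.norm_of_nonneg (by positivity)]
    exact mul_le_of_le_one_right hε.le (div_le_one_of_le₀ (by linarith) (by positivity))
  refine ⟨cfc f p, cfc_predicate f p, ?_, hdefect, ?_⟩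
  · rw [hcomm, hmul f hf]
    refine norm_cfc_le zero_le_one fun x hx ↦ ?_
    have hx' := hnonneg hx
    simp only [f, abs_of_nonneg hx']
    rw [Real.norm_of_nonneg (by positivity), inv_mul_eq_div]
    exact div_le_one_of_le₀ (by linarith) (by positivity)
  · rwa [mul_sub, mul_one, ← mul_assoc, hcomm]

-- With `k = a (|a| + ε)⁻¹`, which tends strongly to the partial isometry of `a = u |a|`.
lemma exists_approx_polar (a : A) {ε : ℝ} (hε : 0 < ε) :
    ∃ k : A, ‖k‖ ≤ 1 ∧ ‖CFC.abs a - star k * a‖ ≤ ε ∧ ‖a - k * CFC.abs a‖ ≤ ε := by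
  obtain ⟨r, hr, hle, hleft, hright⟩ := exists_norm_regularized_inv_mul_le (CFC.abs_nonneg a) hε
  refine ⟨a * r, ?_, ?_, ?_⟩
  · rwa [← norm_abs_mul]
  · rwa [star_mul, hr.star_eq, mul_assoc, ← CFC.abs_mul_abs, ← mul_assoc]
  · rwa [mul_assoc, ← mul_one_sub, ← norm_abs_mul]

lemma abs_mem_closure_contraction_mul (a : A) :
    CFC.abs a ∈ closure ((· * a) '' Metric.closedBall 0 1) := by
  refine Metric.mem_closure_iff.2 fun ε hε ↦ ?_
  obtain ⟨k, hk, habs, -⟩ := exists_approx_polar a (half_pos hε)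
  refine ⟨_, ⟨star k, by simpa using hk, rfl⟩, ?_⟩
  rw [dist_eq_norm]
  exact habs.trans_lt (half_lt_self hε)

lemma mem_closure_contraction_mul_abs (a : A) :
    a ∈ closure ((· * CFC.abs a) '' Metric.closedBall 0 1) := by
  refine Metric.mem_closure_iff.2 fun ε hε ↦ ?_
  obtain ⟨k, hk, -, hpolar⟩ := exists_approx_polar a (half_pos hε)
  refine ⟨_, ⟨k, by simpa using hk, rfl⟩, ?_⟩
  rw [dist_eq_norm]
  exact hpolar.trans_lt (half_lt_self hε)

end ApproximatePolarDecomposition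

section ENorm

variable {E : Type*} [SeminormedAddCommGroup E]

lemma enorm_le_one_iff_norm_le_one {x : E} : ‖x‖ₑ ≤ 1 ↔ ‖x‖ ≤ 1 := by
  rw [← ofReal_norm, ENNReal.ofReal_le_one]

lemma enorm_star_eq [StarAddMonoid E] [NormedStarGroup E] (x : E) : ‖star x‖ₑ = ‖x‖ₑ := by
  rw [← ofReal_norm, norm_star, ofReal_norm]

lemma enorm_inner_le {𝕜 E : Type*} [RCLike 𝕜] [SeminormedAddCommGroup E] [InnerProductSpace 𝕜 E]
    (x y : E) : ‖⟪x, y⟫_𝕜‖ₑ ≤ ‖x‖ₑ * ‖y‖ₑ := by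
  simpa only [enorm, ← ENNReal.coe_mul, ENNReal.coe_le_coe] using nnnorm_inner_le_nnnorm x y

lemma enorm_one_clm_le {E : Type*} [SeminormedAddCommGroup E] [NormedSpace ℂ E] :
    ‖(1 : E →L[ℂ] E)‖ₑ ≤ 1 :=
  enorm_le_one_iff_norm_le_one.2 ContinuousLinearMap.norm_id_le

end ENorm

section DiagonalSums

variable {ι E : Type*} [NormedAddCommGroup E] [InnerProductSpace ℂ E]

/-- The square of the Hilbert–Schmidt norm, as an extended nonnegative real. -/
def hilbertSchmidtSq (e : HilbertBasis ι ℂ E) (T : E →L[ℂ] E) : ENNReal :=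
  ∑' i, ‖T (e i)‖ₑ ^ 2

/-- The absolute sum of the diagonal matrix entries of `T`. For `T ≥ 0` this is the trace. -/
def diagSum (e : HilbertBasis ι ℂ E) (T : E →L[ℂ] E) : ENNReal :=
  ∑' i, ‖⟪e i, T (e i)⟫_ℂ‖ₑ

lemma hilbertSchmidtSq_mul_le_left (e : HilbertBasis ι ℂ E) (S T : E →L[ℂ] E) :
    hilbertSchmidtSq e (S * T) ≤ ‖S‖ₑ ^ 2 * hilbertSchmidtSq e T := by
  rw [hilbertSchmidtSq, hilbertSchmidtSq, ← ENNReal.tsum_mul_left]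
  refine ENNReal.tsum_le_tsum fun i ↦ ?_
  rw [← mul_pow]
  gcongr
  exact S.le_opENorm (T (e i))

lemma diagSum_add_le (e : HilbertBasis ι ℂ E) (S T : E →L[ℂ] E) :
    diagSum e (S + T) ≤ diagSum e S + diagSum e T := by
  rw [diagSum, diagSum, diagSum, ← ENNReal.tsum_add]
  refine ENNReal.tsum_le_tsum fun i ↦ ?_
  rw [add_apply, inner_add_right]
  exact enorm_add_le _ _

lemma isClosed_setOf_diagSum_le (e : HilbertBasis ι ℂ E) (C : ENNReal) :
    IsClosed {T : E →L[ℂ] E | diagSum e T ≤ C} := by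
  refine LowerSemicontinuous.isClosed_preimage (f := diagSum e) ?_ C
  refine lowerSemicontinuous_tsum fun i ↦ Continuous.lowerSemicontinuous ?_
  fun_prop

end DiagonalSums

section TraceNorm

variable {ι : Type*} (e : HilbertBasis ι ℂ ℋ)

lemma hilbertSchmidtSq_star (T : ℋ →L[ℂ] ℋ) :
    hilbertSchmidtSq e (star T) = hilbertSchmidtSq e T := by
  simp_rw [hilbertSchmidtSq, ← tsum_enorm_inner_sq e]
  rw [ENNReal.tsum_comm]
  refine tsum_congr fun i ↦ tsum_congr fun j ↦ ?_
  rw [ContinuousLinearMap.star_eq_adjoint, ContinuousLinearMap.adjoint_inner_right,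
    ← inner_conj_symm, RCLike.enorm_conj]

lemma hilbertSchmidtSq_mul_le_right (S T : ℋ →L[ℂ] ℋ) :
    hilbertSchmidtSq e (S * T) ≤ ‖T‖ₑ ^ 2 * hilbertSchmidtSq e S := by
  rw [← hilbertSchmidtSq_star, star_mul, ← hilbertSchmidtSq_star e S, ← enorm_star_eq T]
  exact hilbertSchmidtSq_mul_le_left e (star T) (star S)

lemma enorm_sq_le_hilbertSchmidtSq (T : ℋ →L[ℂ] ℋ) : ‖T‖ₑ ^ 2 ≤ hilbertSchmidtSq e T := by
  have hsq : (hilbertSchmidtSq e T ^ (1 / 2 : ℝ)) ^ 2 = hilbertSchmidtSq e T := by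
    rw [← ENNReal.rpow_ofNat, ← ENNReal.rpow_mul]
    norm_num
  rw [← hsq, ENNReal.pow_le_pow_left_iff two_ne_zero]
  refine T.opENorm_le_bound fun x ↦ ?_
  rw [← ENNReal.pow_le_pow_left_iff two_ne_zero, mul_pow, hsq]
  calc ‖T x‖ₑ ^ 2 = ∑' i, ‖⟪star T (e i), x⟫_ℂ‖ₑ ^ 2 := by
        rw [← tsum_enorm_inner_sq e]
        simp only [ContinuousLinearMap.star_eq_adjoint, ContinuousLinearMap.adjoint_inner_left]
    _ ≤ ∑' i, ‖star T (e i)‖ₑ ^ 2 * ‖x‖ₑ ^ 2 := by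
        gcongr with i
        rw [← mul_pow]
        gcongr
        exact enorm_inner_le _ _
    _ = hilbertSchmidtSq e T * ‖x‖ₑ ^ 2 := by
        rw [ENNReal.tsum_mul_right, ← hilbertSchmidtSq_star, hilbertSchmidtSq]

lemma diagSum_star_mul_le (S T : ℋ →L[ℂ] ℋ) :
    diagSum e (star S * T) ≤
      hilbertSchmidtSq e S ^ (1 / 2 : ℝ) * hilbertSchmidtSq e T ^ (1 / 2 : ℝ) := by
  simp only [diagSum, ENNReal.tsum_eq_iSup_sum]
  refine iSup_le fun F ↦ ?_
  calc ∑ i ∈ F, ‖⟪e i, (star S * T) (e i)⟫_ℂ‖ₑ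
      ≤ ∑ i ∈ F, ‖S (e i)‖ₑ * ‖T (e i)‖ₑ := by
        gcongr with i
        rw [mul_apply_eq_comp, ContinuousLinearMap.star_eq_adjoint,
          ContinuousLinearMap.adjoint_inner_right]
        exact enorm_inner_le _ _
    _ ≤ (∑ i ∈ F, ‖S (e i)‖ₑ ^ (2 : ℝ)) ^ (1 / 2 : ℝ) *
          (∑ i ∈ F, ‖T (e i)‖ₑ ^ (2 : ℝ)) ^ (1 / 2 : ℝ) :=
        ENNReal.inner_le_Lp_mul_Lq F _ _ Real.HolderConjugate.two_two
    _ ≤ _ := by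
        simp only [ENNReal.rpow_ofNat]
        gcongr <;> exact ENNReal.sum_le_tsum F

lemma diagSum_star_mul_self (T : ℋ →L[ℂ] ℋ) :
    diagSum e (star T * T) = hilbertSchmidtSq e T := by
  refine tsum_congr fun i ↦ ?_
  rw [mul_apply_eq_comp, ContinuousLinearMap.star_eq_adjoint,
    ContinuousLinearMap.adjoint_inner_right, inner_self_eq_norm_sq_to_K, enorm_pow]
  simp [← ofReal_norm]

/-- The trace norm with value `∞` off the trace class, where `traceNorm` is `0` instead; its
inequalities need no summability hypotheses. -/
def eTraceNorm (T : ℋ →L[ℂ] ℋ) : ENNReal :=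
  diagSum e (CFC.abs T)

lemma diagSum_eq_hilbertSchmidtSq_sqrt {P : ℋ →L[ℂ] ℋ} (hP : 0 ≤ P) :
    diagSum e P = hilbertSchmidtSq e (CFC.sqrt P) := by
  rw [← diagSum_star_mul_self, (CFC.sqrt_nonneg P).star_eq, CFC.sqrt_mul_sqrt_self P hP]

lemma diagSum_mul_mul_le_of_nonneg {P : ℋ →L[ℂ] ℋ} (hP : 0 ≤ P) (A B : ℋ →L[ℂ] ℋ) :
    diagSum e (A * P * B) ≤ ‖A‖ₑ * ‖B‖ₑ * diagSum e P := by
  set R := CFC.sqrt P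
  have hsplit : A * P * B = star (R * star A) * (R * B) := by
    have hR : star R = R := (CFC.sqrt_nonneg P).star_eq
    have hRR : R * R = P := CFC.sqrt_mul_sqrt_self P hP
    rw [star_mul, star_star, hR, ← hRR]
    simp only [mul_assoc]
  have hfactor (T : ℋ →L[ℂ] ℋ) :
      hilbertSchmidtSq e (R * T) ^ (1 / 2 : ℝ) ≤ ‖T‖ₑ * diagSum e P ^ (1 / 2 : ℝ) := by
    calc hilbertSchmidtSq e (R * T) ^ (1 / 2 : ℝ)
        ≤ (‖T‖ₑ ^ 2 * diagSum e P) ^ (1 / 2 : ℝ) := by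
          rw [diagSum_eq_hilbertSchmidtSq_sqrt e hP]
          gcongr
          exact hilbertSchmidtSq_mul_le_right e R T
      _ = ‖T‖ₑ * diagSum e P ^ (1 / 2 : ℝ) := by
          rw [ENNReal.mul_rpow_of_nonneg _ _ (by norm_num), ← ENNReal.rpow_ofNat,
            ← ENNReal.rpow_mul]
          norm_num
  calc diagSum e (A * P * B)
      ≤ hilbertSchmidtSq e (R * star A) ^ (1 / 2 : ℝ) *
          hilbertSchmidtSq e (R * B) ^ (1 / 2 : ℝ) := hsplit ▸ diagSum_star_mul_le e _ _
    _ ≤ (‖star A‖ₑ * diagSum e P ^ (1 / 2 : ℝ)) * (‖B‖ₑ * diagSum e P ^ (1 / 2 : ℝ)) :=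
        mul_le_mul' (hfactor _) (hfactor _)
    _ = ‖A‖ₑ * ‖B‖ₑ * diagSum e P := by
        rw [mul_mul_mul_comm, enorm_star_eq,
          ← ENNReal.rpow_add_of_nonneg _ _ (by norm_num) (by norm_num)]
        norm_num

lemma diagSum_mul_mul_le (A T B : ℋ →L[ℂ] ℋ) :
    diagSum e (A * T * B) ≤ ‖A‖ₑ * ‖B‖ₑ * eTraceNorm e T := by
  have hclosed : IsClosed {S | diagSum e (A * S * B) ≤ ‖A‖ₑ * ‖B‖ₑ * eTraceNorm e T} :=
    (isClosed_setOf_diagSum_le e _).preimage (f := fun S ↦ A * S * B) (by fun_prop)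
  refine closure_minimal ?_ hclosed (mem_closure_contraction_mul_abs T)
  rintro _ ⟨k, hk, rfl⟩
  have hk' : ‖k‖ₑ ≤ 1 := enorm_le_one_iff_norm_le_one.2 (mem_closedBall_zero_iff.1 hk)
  calc diagSum e (A * (k * CFC.abs T) * B)
      = diagSum e (A * k * CFC.abs T * B) := by rw [← mul_assoc]
    _ ≤ ‖A * k‖ₑ * ‖B‖ₑ * eTraceNorm e T :=
        diagSum_mul_mul_le_of_nonneg e (CFC.abs_nonneg T) _ _
    _ ≤ ‖A‖ₑ * ‖B‖ₑ * eTraceNorm e T := by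
        gcongr
        exact (A.opENorm_comp_le k).trans (mul_le_of_le_one_right' hk')

lemma eTraceNorm_le_of_forall_contraction {T : ℋ →L[ℂ] ℋ} {C : ENNReal}
    (h : ∀ X : ℋ →L[ℂ] ℋ, ‖X‖ₑ ≤ 1 → diagSum e (X * T) ≤ C) : eTraceNorm e T ≤ C := by
  refine closure_minimal ?_ (isClosed_setOf_diagSum_le e C) (abs_mem_closure_contraction_mul T)
  rintro _ ⟨X, hX, rfl⟩
  exact h X (enorm_le_one_iff_norm_le_one.2 (mem_closedBall_zero_iff.1 hX))

lemma eTraceNorm_mul_mul_le (A T B : ℋ →L[ℂ] ℋ) :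
    eTraceNorm e (A * T * B) ≤ ‖A‖ₑ * ‖B‖ₑ * eTraceNorm e T := by
  refine eTraceNorm_le_of_forall_contraction e fun X hX ↦ ?_
  calc diagSum e (X * (A * T * B))
      = diagSum e (X * A * T * B) := by simp only [mul_assoc]
    _ ≤ ‖X * A‖ₑ * ‖B‖ₑ * eTraceNorm e T := diagSum_mul_mul_le e _ _ _
    _ ≤ ‖A‖ₑ * ‖B‖ₑ * eTraceNorm e T := by
        gcongr
        exact (X.opENorm_comp_le A).trans (mul_le_of_le_one_left' hX)

lemma eTraceNorm_mul_le_left (A T : ℋ →L[ℂ] ℋ) :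
    eTraceNorm e (A * T) ≤ ‖A‖ₑ * eTraceNorm e T := by
  have h := eTraceNorm_mul_mul_le e A T 1
  grw [mul_one, enorm_one_clm_le, mul_one] at h
  exact h

lemma eTraceNorm_mul_le_right (T B : ℋ →L[ℂ] ℋ) :
    eTraceNorm e (T * B) ≤ ‖B‖ₑ * eTraceNorm e T := by
  have h := eTraceNorm_mul_mul_le e 1 T B
  grw [one_mul, enorm_one_clm_le, one_mul] at h
  exact h

lemma diagSum_le_eTraceNorm (T : ℋ →L[ℂ] ℋ) : diagSum e T ≤ eTraceNorm e T := by
  have h := diagSum_mul_mul_le e 1 T 1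
  grw [one_mul, mul_one, enorm_one_clm_le, one_mul, one_mul] at h
  exact h

lemma eTraceNorm_add_le (S T : ℋ →L[ℂ] ℋ) :
    eTraceNorm e (S + T) ≤ eTraceNorm e S + eTraceNorm e T := by
  refine eTraceNorm_le_of_forall_contraction e fun X hX ↦ ?_
  have hmul (R : ℋ →L[ℂ] ℋ) : diagSum e (X * R) ≤ eTraceNorm e R :=
    (diagSum_le_eTraceNorm e _).trans <| (eTraceNorm_mul_le_left e X R).trans <|
      mul_le_of_le_one_left' hX
  rw [mul_add]
  exact (diagSum_add_le e _ _).trans (add_le_add (hmul S) (hmul T))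

lemma eTraceNorm_commutator_le (T S : ℋ →L[ℂ] ℋ) :
    eTraceNorm e (T * S - S * T) ≤ 2 * ‖S‖ₑ * eTraceNorm e T := by
  calc eTraceNorm e (T * S - S * T)
      ≤ eTraceNorm e (T * S) + eTraceNorm e (-(S * T)) := by
        rw [sub_eq_add_neg]
        exact eTraceNorm_add_le e _ _
    _ = eTraceNorm e (T * S) + eTraceNorm e (S * T) := by
        rw [eTraceNorm, eTraceNorm, eTraceNorm, CFC.abs_neg]
    _ ≤ ‖S‖ₑ * eTraceNorm e T + ‖S‖ₑ * eTraceNorm e T :=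
        add_le_add (eTraceNorm_mul_le_right e T S) (eTraceNorm_mul_le_left e S T)
    _ = 2 * ‖S‖ₑ * eTraceNorm e T := by ring

lemma eTraceNorm_smul (c : ℂ) (T : ℋ →L[ℂ] ℋ) :
    eTraceNorm e (c • T) = ‖c‖ₑ * eTraceNorm e T := by
  simp only [eTraceNorm, diagSum, CFC.abs_smul, ← ENNReal.tsum_mul_left]
  refine tsum_congr fun i ↦ ?_
  simp [← ofReal_norm]

lemma enorm_le_eTraceNorm (T : ℋ →L[ℂ] ℋ) : ‖T‖ₑ ≤ eTraceNorm e T := by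
  have hsqrt : ‖T‖ = ‖CFC.sqrt (CFC.abs T)‖ ^ 2 := by
    rw [← CFC.norm_abs, sq, ← CStarRing.norm_star_mul_self, (CFC.sqrt_nonneg _).star_eq,
      CFC.sqrt_mul_sqrt_self _ (CFC.abs_nonneg T)]
  rw [← ofReal_norm, hsqrt, ENNReal.ofReal_pow (norm_nonneg _), ofReal_norm, eTraceNorm,
    diagSum_eq_hilbertSchmidtSq_sqrt e (CFC.abs_nonneg T)]
  exact enorm_sq_le_hilbertSchmidtSq e _

lemma re_inner_abs_self_eq_norm (T : ℋ →L[ℂ] ℋ) (x : ℋ) :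
    (⟪x, CFC.abs T x⟫_ℂ).re = ‖⟪x, CFC.abs T x⟫_ℂ‖ :=
  have hpos := (CFC.abs T).nonneg_iff_isPositive.1 (CFC.abs_nonneg T)
  Complex.re_eq_norm.2 (hpos.inner_nonneg_right x)

lemma traceNorm_eq_tsum_norm (T : ℋ →L[ℂ] ℋ) :
    traceNorm e T = ∑' i, ‖⟪e i, CFC.abs T (e i)⟫_ℂ‖ :=
  tsum_congr fun i ↦ re_inner_abs_self_eq_norm T (e i)

lemma traceNorm_eq_toReal_eTraceNorm (T : ℋ →L[ℂ] ℋ) :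
    traceNorm e T = (eTraceNorm e T).toReal := by
  rw [traceNorm_eq_tsum_norm, eTraceNorm, diagSum, ENNReal.tsum_toReal_eq fun _ ↦ enorm_ne_top]
  simp only [toReal_enorm]

variable {e}

lemma IsTraceClass.eTraceNorm_eq_ofReal {T : ℋ →L[ℂ] ℋ} (hT : IsTraceClass e T) :
    eTraceNorm e T = ENNReal.ofReal (traceNorm e T) := by
  have hsum : Summable fun i ↦ ‖⟪e i, CFC.abs T (e i)⟫_ℂ‖ :=
    hT.congr fun i ↦ re_inner_abs_self_eq_norm T (e i)
  rw [traceNorm_eq_tsum_norm, ENNReal.ofReal_tsum_of_nonneg (fun _ ↦ norm_nonneg _) hsum]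
  simp only [ofReal_norm, eTraceNorm, diagSum]

lemma isTraceClass_of_isPositive {T : ℋ →L[ℂ] ℋ} (hT : T.IsPositive)
    (h : Summable fun i ↦ (⟪e i, T (e i)⟫_ℂ).re) : IsTraceClass e T := by
  have habs : CFC.abs T = T := CFC.abs_of_nonneg T (T.nonneg_iff_isPositive.2 hT)
  rwa [IsTraceClass, ← CFC.abs, habs]

lemma traceNorm_eq_of_isPositive {T : ℋ →L[ℂ] ℋ} (hT : T.IsPositive) {r : ℝ}
    (h : HasSum (fun i ↦ (⟪e i, T (e i)⟫_ℂ).re) r) : traceNorm e T = r := by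
  have habs : CFC.abs T = T := CFC.abs_of_nonneg T (T.nonneg_iff_isPositive.2 hT)
  rw [traceNorm, ← CFC.abs, habs, h.tsum_eq]

section Measurability

variable {α : Type*} [MeasurableSpace α] {μ : Measure α} {F : α → ℋ →L[ℂ] ℋ}

lemma aestronglyMeasurable_traceNorm [Countable ι] (hF : AEStronglyMeasurable F μ) :
    AEStronglyMeasurable (fun a ↦ traceNorm e (F a)) μ := by
  simp only [traceNorm_eq_toReal_eTraceNorm]
  refine (AEMeasurable.ennreal_toReal (.tsum fun i ↦ ?_)).aestronglyMeasurable
  have hcont : Continuous fun T : ℋ →L[ℂ] ℋ ↦ ⟪e i, CFC.abs T (e i)⟫_ℂ := by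
    have := CFC.continuous_abs (A := ℋ →L[ℂ] ℋ)
    fun_prop
  exact (hcont.comp_aestronglyMeasurable hF).enorm

lemma integrable_and_integrable_traceNorm_of_eTraceNorm_le [Countable ι] {b : α → ℝ}
    (hF : AEStronglyMeasurable F μ) (hb : Integrable b μ)
    (hle : ∀ᵐ a ∂μ, eTraceNorm e (F a) ≤ ENNReal.ofReal (b a)) :
    Integrable F μ ∧ Integrable (fun a ↦ traceNorm e (F a)) μ := by
  refine ⟨hb.mono_enorm hF ?_, hb.mono_enorm (aestronglyMeasurable_traceNorm hF) ?_⟩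
  · filter_upwards [hle] with a ha
    exact (enorm_le_eTraceNorm e _).trans (ha.trans (Real.ofReal_le_enorm _))
  · filter_upwards [hle] with a ha
    rw [traceNorm_eq_toReal_eTraceNorm, Real.enorm_of_nonneg ENNReal.toReal_nonneg]
    exact ENNReal.ofReal_toReal_le.trans (ha.trans (Real.ofReal_le_enorm _))

end Measurability

section StateValuedMeasure

variable {𝔥 : Type*} [NormedAddCommGroup 𝔥] [InnerProductSpace ℂ 𝔥] [MeasurableSpace 𝔥]
  {μ : Measure 𝔥} {γ : 𝔥 → ℋ →L[ℂ] ℋ}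

lemma IsStateValuedMeasure.ae_isTraceClass (h : IsStateValuedMeasure e μ γ) :
    ∀ᵐ z ∂μ, IsTraceClass e (γ z) := by
  obtain ⟨-, -, -, hpos, htrace⟩ := h
  filter_upwards [hpos, htrace] with z hz hz'
  exact isTraceClass_of_isPositive hz hz'.summable

lemma IsStateValuedMeasure.ae_traceNorm_eq_one (h : IsStateValuedMeasure e μ γ) :
    ∀ᵐ z ∂μ, traceNorm e (γ z) = 1 := by
  obtain ⟨-, -, -, hpos, htrace⟩ := h
  filter_upwards [hpos, htrace] with z hz hz'
  exact traceNorm_eq_of_isPositive hz hz'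

lemma IsStateValuedMeasure.integrable_mul_traceNorm (h : IsStateValuedMeasure e μ γ)
    {f : 𝔥 → ℝ} (hf : Integrable f μ) : Integrable (fun z ↦ f z * traceNorm e (γ z)) μ := by
  refine hf.congr ?_
  filter_upwards [h.ae_traceNorm_eq_one] with z hz
  rw [hz, mul_one]

end StateValuedMeasure

end TraceNorm

section CStarIsometry

variable {A : Type*} [NormedRing A] [StarRing A] [CStarRing A] {a b : A}

lemma norm_le_one_of_star_mul_self_eq_one (ha : star a * a = 1) : ‖a‖ ≤ 1 := by
  cases subsingleton_or_nontrivial A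
  · simp [Subsingleton.elim a 0]
  · rw [← sq_le_one_iff₀ (norm_nonneg a), sq, ← CStarRing.norm_star_mul_self, ha,
      CStarRing.norm_one]

lemma norm_sub_sq_le_of_star_mul_self_eq_one (ha : star a * a = 1) (hb : star b * b = 1) :
    ‖a - b‖ ^ 2 ≤ 2 * ‖star a * b - 1‖ := by
  have hexpand : star (a - b) * (a - b) = -(star a * b - 1) - star (star a * b - 1) := by
    simp only [star_sub, star_mul, star_star, star_one, sub_mul, mul_sub, ha, hb]
    abel
  calc ‖a - b‖ ^ 2 = ‖-(star a * b - 1) - star (star a * b - 1)‖ := by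
        rw [sq, ← CStarRing.norm_star_mul_self, hexpand]
    _ ≤ ‖star a * b - 1‖ + ‖star a * b - 1‖ := by
        simpa only [norm_neg, norm_star] using
          norm_sub_le (-(star a * b - 1)) (star (star a * b - 1))
    _ = 2 * ‖star a * b - 1‖ := (two_mul _).symm

end CStarIsometry

section Propagator

variable {H H₁ H₂ : ℝ → ℋ →L[ℂ] ℋ} {U U₁ U₂ : ℝ → ℝ → ℋ →L[ℂ] ℋ}

lemma IsPropagator.hasDerivAt (hU : IsPropagator H U) (hH : Continuous H) (s t : ℝ) :
    HasDerivAt (fun τ ↦ U τ s) (-(I • (H t * U t s))) t := by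
  have hcont : Continuous fun τ ↦ H τ * U τ s := hH.mul (hU.1 s)
  have hderiv := ((hcont.integral_hasStrictDerivAt s t).hasDerivAt.const_smul I).const_sub
    (1 : ℋ →L[ℂ] ℋ)
  exact hderiv.congr_of_eventuallyEq (.of_forall (hU.2 s))

lemma IsPropagator.apply_self {E : Type*} [NormedAddCommGroup E] [InnerProductSpace ℂ E]
    {H : ℝ → E →L[ℂ] E} {U : ℝ → ℝ → E →L[ℂ] E} (hU : IsPropagator H U) (s : ℝ) :
    U s s = 1 := by
  simp [hU.2 s s]

lemma IsPropagator.hasDerivAt_star_mul (hU₁ : IsPropagator H₁ U₁) (hU₂ : IsPropagator H₂ U₂)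
    (hH₁ : Continuous H₁) (hH₂ : Continuous H₂) (hsa : ∀ τ, IsSelfAdjoint (H₁ τ)) (s t : ℝ) :
    HasDerivAt (fun τ ↦ star (U₁ τ s) * U₂ τ s)
      (I • (star (U₁ t s) * (H₁ t - H₂ t) * U₂ t s)) t := by
  refine ((hU₁.hasDerivAt hH₁ s t).star.mul (hU₂.hasDerivAt hH₂ s t)).congr_deriv ?_
  simp only [star_neg, star_smul, star_mul, (hsa t).star_eq, mul_sub, sub_mul, smul_sub, mul_neg,
    mul_smul_comm, smul_mul_assoc, mul_assoc, RCLike.star_def, conj_I, neg_smul, neg_neg]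
  exact (sub_eq_add_neg _ _).symm

lemma IsPropagator.star_mul_self (hU : IsPropagator H U) (hH : Continuous H)
    (hsa : ∀ τ, IsSelfAdjoint (H τ)) (s t : ℝ) : star (U t s) * U t s = 1 := by
  have hderiv := hU.hasDerivAt_star_mul hU hH hH hsa s
  have hconst : star (U t s) * U t s = star (U s s) * U s s :=
    is_const_of_deriv_eq_zero (fun τ ↦ (hderiv τ).differentiableAt)
      (fun τ ↦ by rw [(hderiv τ).deriv, sub_self, mul_zero, zero_mul, smul_zero]) t s
  rw [hconst, hU.apply_self, star_one, one_mul]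

lemma IsPropagator.norm_le_one (hU : IsPropagator H U) (hH : Continuous H)
    (hsa : ∀ τ, IsSelfAdjoint (H τ)) (s t : ℝ) : ‖U t s‖ ≤ 1 :=
  norm_le_one_of_star_mul_self_eq_one (hU.star_mul_self hH hsa s t)

lemma IsPropagator.norm_sub_sq_le (hU₁ : IsPropagator H₁ U₁) (hU₂ : IsPropagator H₂ U₂)
    (hH₁ : Continuous H₁) (hH₂ : Continuous H₂) (hsa₁ : ∀ τ, IsSelfAdjoint (H₁ τ))
    (hsa₂ : ∀ τ, IsSelfAdjoint (H₂ τ)) {s t C : ℝ}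
    (hC : ∀ τ ∈ Set.uIcc s t, ‖H₁ τ - H₂ τ‖ ≤ C) :
    ‖U₁ t s - U₂ t s‖ ^ 2 ≤ 2 * (C * |t - s|) := by
  have hderiv_le (τ : ℝ) (hτ : τ ∈ Set.uIcc s t) :
      ‖I • (star (U₁ τ s) * (H₁ τ - H₂ τ) * U₂ τ s)‖ ≤ C := by
    have h₁ : ‖star (U₁ τ s)‖ ≤ 1 := (norm_star _).trans_le (hU₁.norm_le_one hH₁ hsa₁ s τ)
    have h₂ : ‖U₂ τ s‖ ≤ 1 := hU₂.norm_le_one hH₂ hsa₂ s τ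
    calc ‖I • (star (U₁ τ s) * (H₁ τ - H₂ τ) * U₂ τ s)‖
        ≤ ‖star (U₁ τ s)‖ * ‖H₁ τ - H₂ τ‖ * ‖U₂ τ s‖ := by
          rw [norm_smul, norm_I, one_mul]
          exact norm_mul₃_le
      _ ≤ 1 * ‖H₁ τ - H₂ τ‖ * 1 := by gcongr
      _ ≤ C := by simpa only [one_mul, mul_one] using hC τ hτ
  have hmean := (convex_uIcc s t).norm_image_sub_le_of_norm_hasDerivWithin_le
    (fun τ _ ↦ (hU₁.hasDerivAt_star_mul hU₂ hH₁ hH₂ hsa₁ s τ).hasDerivWithinAt) hderiv_le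
    Set.left_mem_uIcc Set.right_mem_uIcc
  rw [hU₁.apply_self, hU₂.apply_self, star_one, one_mul, Real.norm_eq_abs] at hmean
  refine (norm_sub_sq_le_of_star_mul_self_eq_one (hU₁.star_mul_self hH₁ hsa₁ s t)
    (hU₂.star_mul_self hH₂ hsa₂ s t)).trans ?_
  gcongr

lemma hasDerivAt_gammaT {X : Type*} {U : X → ℝ → ℝ → ℋ →L[ℂ] ℋ} {x : X}
    (hU : IsPropagator H (U x)) (hH : Continuous H) (hsa : ∀ τ, IsSelfAdjoint (H τ))
    (γ : X → ℋ →L[ℂ] ℋ) (t : ℝ) :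
    HasDerivAt (fun τ ↦ gammaT U γ τ x) (I • (gammaT U γ t x * H t - H t * gammaT U γ t x)) t := by
  have hderiv := hU.hasDerivAt hH 0 t
  refine ((hderiv.mul_const (γ x)).mul hderiv.star).congr_deriv ?_
  simp only [gammaT, star_neg, star_smul, star_mul, (hsa t).star_eq, smul_sub, neg_mul,
    mul_smul_comm, smul_mul_assoc, mul_assoc, RCLike.star_def, conj_I, neg_smul, neg_neg]
  abel

end Propagator

lemma eventually_forall_norm_sub_le {X Y E : Type*} [TopologicalSpace X] [TopologicalSpace Y]
    [SeminormedAddCommGroup E] {F : X → Y → E} (hF : Continuous (Function.uncurry F)) (x₀ : X)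
    {K : Set Y} (hK : IsCompact K) {ε : ℝ} (hε : 0 < ε) :
    ∀ᶠ x in nhds x₀, ∀ y ∈ K, ‖F x y - F x₀ y‖ ≤ ε := by
  refine hK.eventually_forall_of_forall_eventually fun y _ ↦ ?_
  have hcont : Continuous fun p : X × Y ↦ ‖F p.1 p.2 - F x₀ p.2‖ :=
    (hF.sub ((hF.uncurry_left x₀).comp continuous_snd)).norm
  refine (hcont.tendsto (x₀, y)).eventually_le_const ?_
  simpa using hε

section PropagatorFamily

variable {X : Type*} [TopologicalSpace X]

/-- A jointly continuous family `H x τ` of self-adjoint Hamiltonians together with the propagators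
`U x` it generates. -/
structure IsPropagatorFamily (H : X → ℝ → ℋ →L[ℂ] ℋ) (U : X → ℝ → ℝ → ℋ →L[ℂ] ℋ) : Prop where
  continuous_uncurry : Continuous (Function.uncurry H)
  isSelfAdjoint : ∀ x τ, IsSelfAdjoint (H x τ)
  isPropagator : ∀ x, IsPropagator (H x) (U x)

namespace IsPropagatorFamily

variable {H : X → ℝ → ℋ →L[ℂ] ℋ} {U : X → ℝ → ℝ → ℋ →L[ℂ] ℋ}

lemma continuous_hamiltonian (hU : IsPropagatorFamily H U) (x : X) : Continuous (H x) :=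
  hU.continuous_uncurry.uncurry_left x

lemma norm_le_one (hU : IsPropagatorFamily H U) (x : X) (s t : ℝ) : ‖U x t s‖ ≤ 1 :=
  (hU.isPropagator x).norm_le_one (hU.continuous_hamiltonian x) (hU.isSelfAdjoint x) s t

lemma norm_sub_sq_le (hU : IsPropagatorFamily H U) (x y : X) {s t C : ℝ}
    (hC : ∀ τ ∈ Set.uIcc s t, ‖H x τ - H y τ‖ ≤ C) :
    ‖U x t s - U y t s‖ ^ 2 ≤ 2 * (C * |t - s|) :=
  (hU.isPropagator x).norm_sub_sq_le (hU.isPropagator y) (hU.continuous_hamiltonian x)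
    (hU.continuous_hamiltonian y) (hU.isSelfAdjoint x) (hU.isSelfAdjoint y) hC

lemma continuous_propagator (hU : IsPropagatorFamily H U) (s t : ℝ) :
    Continuous fun x ↦ U x t s := by
  refine Metric.continuous_iff'.2 fun y ε hε ↦ ?_
  have hδ : 0 < ε ^ 2 / (2 * (|t - s| + 1)) := by positivity
  filter_upwards [eventually_forall_norm_sub_le hU.continuous_uncurry y isCompact_uIcc hδ] with x hx
  rw [dist_eq_norm]
  refine lt_of_pow_lt_pow_left₀ 2 hε.le ((hU.norm_sub_sq_le x y hx).trans_lt ?_)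
  calc 2 * (ε ^ 2 / (2 * (|t - s| + 1)) * |t - s|)
      = ε ^ 2 * (|t - s| / (|t - s| + 1)) := by field_simp
    _ < ε ^ 2 := mul_lt_of_lt_one_right (by positivity)
        ((div_lt_one (by positivity)).2 (lt_add_one _))

variable [MeasurableSpace X] [OpensMeasurableSpace X] [SecondCountableTopology X]

lemma stronglyMeasurable_uncurry (hU : IsPropagatorFamily H U) (s : ℝ) :
    StronglyMeasurable fun p : ℝ × X ↦ U p.2 p.1 s :=
  stronglyMeasurable_uncurry_of_continuous_of_stronglyMeasurable (u := fun t x ↦ U x t s)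
    (fun x ↦ (hU.isPropagator x).1 s) fun t ↦ (hU.continuous_propagator s t).stronglyMeasurable

end IsPropagatorFamily

end PropagatorFamily

lemma integral_sub_integral_eq_intervalIntegral_integral {X E : Type*} [MeasurableSpace X]
    {μ : Measure X} [SFinite μ] [NormedAddCommGroup E] [NormedSpace ℝ E] [CompleteSpace E]
    {F F' : ℝ → X → E} {s t : ℝ}
    (hderiv : ∀ x, ∀ τ ∈ Set.uIcc s t, HasDerivAt (fun σ ↦ F σ x) (F' τ x) τ)
    (ht : Integrable (F t) μ) (hs : Integrable (F s) μ)
    (hF' : Integrable (Function.uncurry F') ((volume.restrict (Set.uIoc s t)).prod μ)) :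
    ∫ x, F t x ∂μ - ∫ x, F s x ∂μ = ∫ τ in s..t, ∫ x, F' τ x ∂μ := by
  rw [intervalIntegral_integral_swap hF', ← integral_sub ht hs]
  refine integral_congr_ae ?_
  filter_upwards [hF'.prod_left_ae] with x hx
  exact (intervalIntegral.integral_eq_sub_of_hasDerivAt (hderiv x)
    (intervalIntegrable_iff.2 hx)).symm

lemma eTraceNorm_gammaT_le {X ι : Type*} (e : HilbertBasis ι ℂ ℋ)
    {U : X → ℝ → ℝ → ℋ →L[ℂ] ℋ} (γ : X → ℋ →L[ℂ] ℋ) {x : X} {t : ℝ} (hU : ‖U x t 0‖ ≤ 1) :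
    eTraceNorm e (gammaT U γ t x) ≤ eTraceNorm e (γ x) := by
  have hU' : ‖U x t 0‖ₑ ≤ 1 := enorm_le_one_iff_norm_le_one.2 hU
  have h := eTraceNorm_mul_mul_le e (U x t 0) (γ x) (star (U x t 0))
  grw [enorm_star_eq, hU', one_mul, one_mul] at h
  exact h

section Transport

variable {X : Type*} [TopologicalSpace X] {H : X → ℝ → ℋ →L[ℂ] ℋ} {U : X → ℝ → ℝ → ℋ →L[ℂ] ℋ}
  {ι : Type*} {e : HilbertBasis ι ℂ ℋ} {γ : X → ℋ →L[ℂ] ℋ}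

namespace IsPropagatorFamily

lemma eTraceNorm_smul_commutator_gammaT_le (hU : IsPropagatorFamily H U) {c : ℂ} (hc : ‖c‖ ≤ 1)
    {x : X} (hx : IsTraceClass e (γ x)) {τ m : ℝ} (hm : ‖H x τ‖ ≤ m) :
    eTraceNorm e (c • (gammaT U γ τ x * H x τ - H x τ * gammaT U γ τ x)) ≤
      ENNReal.ofReal (2 * (m * traceNorm e (γ x))) := by
  have hm₀ : 0 ≤ m := (norm_nonneg _).trans hm
  calc eTraceNorm e (c • (gammaT U γ τ x * H x τ - H x τ * gammaT U γ τ x))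
      = ‖c‖ₑ * eTraceNorm e (gammaT U γ τ x * H x τ - H x τ * gammaT U γ τ x) :=
        eTraceNorm_smul e _ _
    _ ≤ 1 * (2 * ‖H x τ‖ₑ * eTraceNorm e (gammaT U γ τ x)) :=
        mul_le_mul' (enorm_le_one_iff_norm_le_one.2 hc) (eTraceNorm_commutator_le e _ _)
    _ ≤ 1 * (2 * ENNReal.ofReal m * eTraceNorm e (γ x)) := by
        rw [← ofReal_norm]
        gcongr
        exact eTraceNorm_gammaT_le e γ (hU.norm_le_one x 0 τ)
    _ = ENNReal.ofReal (2 * (m * traceNorm e (γ x))) := by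
        rw [hx.eTraceNorm_eq_ofReal, one_mul, mul_assoc, ENNReal.ofReal_mul zero_le_two,
          ENNReal.ofReal_mul hm₀, ENNReal.ofReal_ofNat]

variable [MeasurableSpace X] {μ : Measure X} {θ : X → ℂ}

lemma integral_smul_gammaT_sub [SFinite μ] (hU : IsPropagatorFamily H U) {s t : ℝ}
    (ht : Integrable (fun x ↦ θ x • gammaT U γ t x) μ)
    (hs : Integrable (fun x ↦ θ x • gammaT U γ s x) μ)
    (hcomm : Integrable (fun p : ℝ × X ↦
        θ p.2 • (gammaT U γ p.1 p.2 * H p.2 p.1 - H p.2 p.1 * gammaT U γ p.1 p.2))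
      ((volume.restrict (Set.uIcc s t)).prod μ)) :
    ∫ x, θ x • gammaT U γ t x ∂μ - ∫ x, θ x • gammaT U γ s x ∂μ =
      I • ∫ τ in s..t, ∫ x, θ x • (gammaT U γ τ x * H x τ - H x τ * gammaT U γ τ x) ∂μ := by
  simp only [← intervalIntegral.integral_smul, ← integral_smul]
  refine integral_sub_integral_eq_intervalIntegral_integral
    (F := fun τ x ↦ θ x • gammaT U γ τ x) (fun x τ _ ↦ ?_) ht hs ?_
  · rw [smul_comm]
    exact (hasDerivAt_gammaT (hU.isPropagator x) (hU.continuous_hamiltonian x)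
      (hU.isSelfAdjoint x) γ τ).const_smul (θ x)
  · exact (hcomm.smul I).mono_measure
      (Measure.prod_mono (Measure.restrict_mono Set.uIoc_subset_uIcc le_rfl) le_rfl)

variable [OpensMeasurableSpace X] [SecondCountableTopology X]

lemma aestronglyMeasurable_gammaT (hU : IsPropagatorFamily H U) (hγ : AEStronglyMeasurable γ μ)
    (t : ℝ) : AEStronglyMeasurable (gammaT U γ t) μ :=
  have hUt := hU.continuous_propagator 0 t
  (hUt.aestronglyMeasurable.mul hγ).mul hUt.star.aestronglyMeasurable

lemma aestronglyMeasurable_gammaT_prod (hU : IsPropagatorFamily H U)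
    (hγ : AEStronglyMeasurable γ μ) (ν : Measure ℝ) :
    AEStronglyMeasurable (fun p : ℝ × X ↦ gammaT U γ p.1 p.2) (ν.prod μ) :=
  have hUmeas := hU.stronglyMeasurable_uncurry 0
  (hUmeas.aestronglyMeasurable.mul hγ.comp_snd).mul hUmeas.star.aestronglyMeasurable

lemma integrable_smul_gammaT [Countable ι] (hU : IsPropagatorFamily H U)
    (hγ : AEStronglyMeasurable γ μ) (hγtc : ∀ᵐ x ∂μ, IsTraceClass e (γ x))
    (hγint : Integrable (fun x ↦ traceNorm e (γ x)) μ)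
    (hθ : AEStronglyMeasurable θ μ) (hθle : ∀ x, ‖θ x‖ ≤ 1) (t : ℝ) :
    Integrable (fun x ↦ θ x • gammaT U γ t x) μ ∧
      Integrable (fun x ↦ traceNorm e (θ x • gammaT U γ t x)) μ := by
  refine integrable_and_integrable_traceNorm_of_eTraceNorm_le
    (hθ.smul (hU.aestronglyMeasurable_gammaT hγ t)) hγint ?_
  filter_upwards [hγtc] with x hx
  calc eTraceNorm e (θ x • gammaT U γ t x)
      = ‖θ x‖ₑ * eTraceNorm e (gammaT U γ t x) := eTraceNorm_smul e _ _
    _ ≤ 1 * eTraceNorm e (γ x) :=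
        mul_le_mul' (enorm_le_one_iff_norm_le_one.2 (hθle x))
          (eTraceNorm_gammaT_le e γ (hU.norm_le_one x 0 t))
    _ = ENNReal.ofReal (traceNorm e (γ x)) := by rw [one_mul, hx.eTraceNorm_eq_ofReal]

lemma integrable_smul_commutator_gammaT [Countable ι] [SFinite μ] (hU : IsPropagatorFamily H U)
    (hγ : AEStronglyMeasurable γ μ) (hγtc : ∀ᵐ x ∂μ, IsTraceClass e (γ x))
    (hθ : AEStronglyMeasurable θ μ) (hθle : ∀ x, ‖θ x‖ ≤ 1) {s t : ℝ} {m : X → ℝ}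
    (hm : ∀ x, ∀ τ ∈ Set.uIcc s t, ‖H x τ‖ ≤ m x)
    (hmint : Integrable (fun x ↦ m x * traceNorm e (γ x)) μ) :
    Integrable (fun p : ℝ × X ↦
        θ p.2 • (gammaT U γ p.1 p.2 * H p.2 p.1 - H p.2 p.1 * gammaT U γ p.1 p.2))
      ((volume.restrict (Set.uIcc s t)).prod μ) ∧
    Integrable (fun p : ℝ × X ↦ traceNorm e
        (θ p.2 • (gammaT U γ p.1 p.2 * H p.2 p.1 - H p.2 p.1 * gammaT U γ p.1 p.2)))
      ((volume.restrict (Set.uIcc s t)).prod μ) := by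
  have hfinite : IsFiniteMeasure (volume.restrict (Set.uIcc s t)) :=
    isFiniteMeasure_restrict.2 isCompact_uIcc.measure_ne_top
  have hHmeas : AEStronglyMeasurable (fun p : ℝ × X ↦ H p.2 p.1)
      ((volume.restrict (Set.uIcc s t)).prod μ) :=
    (hU.continuous_uncurry.comp continuous_swap).aestronglyMeasurable
  have hγmeas := hU.aestronglyMeasurable_gammaT_prod hγ (volume.restrict (Set.uIcc s t))
  refine integrable_and_integrable_traceNorm_of_eTraceNorm_le
    (hθ.comp_snd.smul ((hγmeas.mul hHmeas).sub (hHmeas.mul hγmeas)))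
    ((hmint.const_mul 2).comp_snd _) ?_
  filter_upwards [Measure.quasiMeasurePreserving_fst.ae (ae_restrict_mem measurableSet_uIcc),
    Measure.quasiMeasurePreserving_snd.ae hγtc] with p hτ hx
  exact hU.eTraceNorm_smul_commutator_gammaT_le (hθle p.2) hx (hm p.2 p.1 hτ)

end IsPropagatorFamily

end Transport

section SpinBoson

lemma continuous_sTau (𝔖 𝔰 : ℋ →L[ℂ] ℋ) : Continuous (sTau 𝔖 𝔰) := by
  let _ : NormedAlgebra ℚ (ℋ →L[ℂ] ℋ) := .restrictScalars ℚ ℂ _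
  have := NormedSpace.exp_continuous (𝔸 := ℋ →L[ℂ] ℋ)
  unfold sTau
  fun_prop

lemma isSelfAdjoint_sTau {𝔖 𝔰 : ℋ →L[ℂ] ℋ} (h𝔖 : IsSelfAdjoint 𝔖) (h𝔰 : IsSelfAdjoint 𝔰) (τ : ℝ) :
    IsSelfAdjoint (sTau 𝔖 𝔰 τ) := by
  simp [IsSelfAdjoint, sTau, NormedSpace.star_exp, h𝔖.star_eq, h𝔰.star_eq, mul_assoc]

lemma norm_exp_two_mul_I_mul_ofReal (x : ℝ) : ‖exp (2 * I * x)‖ = 1 := by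
  rw [mul_right_comm, ← ofReal_ofNat, ← ofReal_mul, norm_exp_ofReal_mul_I]

lemma smul_smul_commutator {R C A : Type*} [CommSemiring R] [Monoid C] [Ring A] [Algebra R A]
    [DistribMulAction C A] [SMulCommClass R C A] (r : R) (c : C) (a b : A) :
    r • c • (a * b - b * a) = c • (a * (r • b) - (r • b) * a) := by
  rw [mul_smul_comm, smul_mul_assoc, ← smul_sub, smul_comm]

variable {𝔥 : Type*} [NormedAddCommGroup 𝔥] [InnerProductSpace ℂ 𝔥]

lemma isPropagatorFamily_two_re_inner_smul {S : ℝ → ℋ →L[ℂ] ℋ} {f : ℝ → 𝔥}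
    {U : 𝔥 → ℝ → ℝ → ℋ →L[ℂ] ℋ} (hS : Continuous S)
    (hSsa : ∀ τ, IsSelfAdjoint (S τ)) (hf : Continuous f)
    (hU : ∀ z, IsPropagator (fun τ ↦ (2 * (⟪z, f τ⟫_ℂ).re) • S τ) (U z)) :
    IsPropagatorFamily (fun z τ ↦ (2 * (⟪z, f τ⟫_ℂ).re) • S τ) U where
  continuous_uncurry := by
    unfold Function.uncurry
    fun_prop
  isSelfAdjoint _ τ := (IsSelfAdjoint.all _).smul (hSsa τ)
  isPropagator := hU

lemma exists_norm_two_re_inner_smul_le {Y F : Type*} [TopologicalSpace Y]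
    [SeminormedAddCommGroup F] [NormedSpace ℝ F] {S : Y → F} {f : Y → 𝔥} (hS : Continuous S)
    (hf : Continuous f) {K : Set Y} (hK : IsCompact K) :
    ∃ C : ℝ, ∀ z, ∀ τ ∈ K, ‖(2 * (⟪z, f τ⟫_ℂ).re) • S τ‖ ≤ C * ‖z‖ := by
  obtain ⟨C, hC⟩ := hK.exists_bound_of_continuousOn
    (f := fun τ ↦ ‖f τ‖ * ‖S τ‖) (by fun_prop)
  refine ⟨2 * C, fun z τ hτ ↦ ?_⟩
  calc ‖(2 * (⟪z, f τ⟫_ℂ).re) • S τ‖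
      = 2 * |(⟪z, f τ⟫_ℂ).re| * ‖S τ‖ := by
        rw [norm_smul, norm_mul, Real.norm_two, Real.norm_eq_abs]
    _ ≤ 2 * (‖z‖ * ‖f τ‖) * ‖S τ‖ := by
        gcongr
        exact (abs_re_le_norm _).trans (norm_inner_le_norm z (f τ))
    _ = 2 * (‖f τ‖ * ‖S τ‖) * ‖z‖ := by ring
    _ ≤ 2 * C * ‖z‖ := by
        gcongr
        exact (le_abs_self _).trans (hC τ hτ)

end SpinBoson

theorem evolved_svm_solves_transport_equation_general
    {𝔥 : Type*} [NormedAddCommGroup 𝔥] [InnerProductSpace ℂ 𝔥]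
    [MeasurableSpace 𝔥] [OpensMeasurableSpace 𝔥] [SecondCountableTopology 𝔥]
    {ι : Type*} [Countable ι] (e : HilbertBasis ι ℂ ℋ)
    {S : ℝ → ℋ →L[ℂ] ℋ} (hS : Continuous S) (hSsa : ∀ τ, IsSelfAdjoint (S τ))
    {f : ℝ → 𝔥} (hf : Continuous f) {U : 𝔥 → ℝ → ℝ → ℋ →L[ℂ] ℋ}
    (hU : ∀ z, IsPropagator (fun τ ↦ (2 * (⟪z, f τ⟫_ℂ).re) • S τ) (U z))
    {μ : Measure 𝔥} [SFinite μ] {γ : 𝔥 → ℋ →L[ℂ] ℋ} (hγ : AEStronglyMeasurable γ μ)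
    (hγtc : ∀ᵐ z ∂μ, IsTraceClass e (γ z)) (hγint : Integrable (fun z ↦ traceNorm e (γ z)) μ)
    (hγmom : Integrable (fun z ↦ ‖z‖ * traceNorm e (γ z)) μ) :
    ∀ (t s : ℝ) (η : 𝔥),
      (Integrable (fun z ↦
        exp (2 * I * ((⟪η, z⟫_ℂ).re : ℂ)) • gammaT U γ t z) μ) ∧
      (Integrable (fun z ↦
        traceNorm e
          (exp (2 * I * ((⟪η, z⟫_ℂ).re : ℂ)) • gammaT U γ t z)) μ) ∧
      (Integrable (fun p : ℝ × 𝔥 ↦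
          (2 * (⟪p.2, f p.1⟫_ℂ).re) •
            exp (2 * I * ((⟪η, p.2⟫_ℂ).re : ℂ)) •
              (gammaT U γ p.1 p.2 * S p.1 - S p.1 * gammaT U γ p.1 p.2))
        ((volume.restrict (Set.uIcc s t)).prod μ)) ∧
      (Integrable (fun p : ℝ × 𝔥 ↦
          traceNorm e
            ((2 * (⟪p.2, f p.1⟫_ℂ).re) •
              exp (2 * I * ((⟪η, p.2⟫_ℂ).re : ℂ)) •
                (gammaT U γ p.1 p.2 * S p.1 - S p.1 * gammaT U γ p.1 p.2)))
        ((volume.restrict (Set.uIcc s t)).prod μ)) ∧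
      (∫ z, exp (2 * I * ((⟪η, z⟫_ℂ).re : ℂ)) • gammaT U γ t z ∂μ) -
          (∫ z, exp (2 * I * ((⟪η, z⟫_ℂ).re : ℂ)) • gammaT U γ s z ∂μ) =
        I • ∫ τ in s..t,
          (∫ z,
            (2 * (⟪z, f τ⟫_ℂ).re) •
              exp (2 * I * ((⟪η, z⟫_ℂ).re : ℂ)) •
                (gammaT U γ τ z * S τ - S τ * gammaT U γ τ z) ∂μ) := by
  intro t s η
  have hfam := isPropagatorFamily_two_re_inner_smul hS hSsa hf hU
  obtain ⟨C, hC⟩ := exists_norm_two_re_inner_smul_le hS hf (isCompact_uIcc (a := s) (b := t))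
  have hθ : AEStronglyMeasurable (fun z : 𝔥 ↦ exp (2 * I * ((⟪η, z⟫_ℂ).re : ℂ))) μ :=
    Continuous.aestronglyMeasurable (by fun_prop)
  have hθle (z : 𝔥) : ‖exp (2 * I * ((⟪η, z⟫_ℂ).re : ℂ))‖ ≤ 1 :=
    (norm_exp_two_mul_I_mul_ofReal _).le
  have hstate := hfam.integrable_smul_gammaT hγ hγtc hγint hθ hθle
  have hcomm := hfam.integrable_smul_commutator_gammaT hγ hγtc hθ hθle hC
    (by simpa only [mul_assoc] using hγmom.const_mul C)
  simp only [smul_smul_commutator]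
  exact ⟨(hstate t).1, (hstate t).2, hcomm.1, hcomm.2,
    hfam.integral_smul_gammaT_sub (hstate t).1 (hstate s).1 hcomm.1⟩

/-- The explicitly evolved state-valued measure solves the quasi-classical
transport equation of the spin-boson model: all integrands are Bochner integrable (also in
trace norm) and
`𝔫̂_t(η) − 𝔫̂_s(η) = i ∫_s^t ∫ [γ_τ(z), 𝔰(τ)] α_τ(z) e^{2i Re⟨η,z⟩} dμ(z) dτ`. -/
theorem evolved_svm_solves_transport_equation
    {𝔥 : Type*} [NormedAddCommGroup 𝔥] [InnerProductSpace ℂ 𝔥] [CompleteSpace 𝔥]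
    [MeasurableSpace 𝔥] [BorelSpace 𝔥] [SecondCountableTopology 𝔥]
    [SecondCountableTopology ℋ]
    {ι : Type*} (e : HilbertBasis ι ℂ ℋ)
    (𝔖 𝔰 : ℋ →L[ℂ] ℋ) (h𝔖 : IsSelfAdjoint 𝔖) (h𝔰 : IsSelfAdjoint 𝔰) (g : 𝔥)
    (V : ℝ → (𝔥 →L[ℂ] 𝔥))
    (hVunit : ∀ τ : ℝ, V τ ∈ unitary (𝔥 →L[ℂ] 𝔥))
    (hV0 : V 0 = 1) (hVgrp : ∀ σ τ : ℝ, V (σ + τ) = V σ * V τ)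
    (hVcont : ∀ x : 𝔥, Continuous fun τ => V τ x)
    (U : 𝔥 → ℝ → ℝ → (ℋ →L[ℂ] ℋ))
    (hU : ∀ z : 𝔥,
      IsPropagator (fun τ => (2 * (⟪z, V τ g⟫_ℂ).re) • sTau 𝔖 𝔰 τ) (U z))
    (μ : Measure 𝔥) (γ : 𝔥 → (ℋ →L[ℂ] ℋ))
    (hsvm : IsStateValuedMeasure e μ γ)
    (hmom : Integrable (fun z : 𝔥 => ‖z‖) μ) :
    ∀ (t s : ℝ) (η : 𝔥),
      (Integrable (fun z : 𝔥 =>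
        Complex.exp (2 * Complex.I * ((⟪η, z⟫_ℂ).re : ℂ)) • gammaT U γ t z) μ) ∧
      (Integrable (fun z : 𝔥 =>
        traceNorm e
          (Complex.exp (2 * Complex.I * ((⟪η, z⟫_ℂ).re : ℂ)) • gammaT U γ t z)) μ) ∧
      (Integrable (fun p : ℝ × 𝔥 =>
          (2 * (⟪p.2, V p.1 g⟫_ℂ).re) •
            Complex.exp (2 * Complex.I * ((⟪η, p.2⟫_ℂ).re : ℂ)) •
              (gammaT U γ p.1 p.2 * sTau 𝔖 𝔰 p.1 - sTau 𝔖 𝔰 p.1 * gammaT U γ p.1 p.2))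
        ((volume.restrict (Set.uIcc s t)).prod μ)) ∧
      (Integrable (fun p : ℝ × 𝔥 =>
          traceNorm e
            ((2 * (⟪p.2, V p.1 g⟫_ℂ).re) •
              Complex.exp (2 * Complex.I * ((⟪η, p.2⟫_ℂ).re : ℂ)) •
                (gammaT U γ p.1 p.2 * sTau 𝔖 𝔰 p.1 - sTau 𝔖 𝔰 p.1 * gammaT U γ p.1 p.2)))
        ((volume.restrict (Set.uIcc s t)).prod μ)) ∧
      (∫ z : 𝔥, Complex.exp (2 * Complex.I * ((⟪η, z⟫_ℂ).re : ℂ)) • gammaT U γ t z ∂μ) -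
          (∫ z : 𝔥, Complex.exp (2 * Complex.I * ((⟪η, z⟫_ℂ).re : ℂ)) • gammaT U γ s z ∂μ) =
        Complex.I • ∫ τ in s..t,
          (∫ z : 𝔥,
            (2 * (⟪z, V τ g⟫_ℂ).re) •
              Complex.exp (2 * Complex.I * ((⟪η, z⟫_ℂ).re : ℂ)) •
                (gammaT U γ τ z * sTau 𝔖 𝔰 τ - sTau 𝔖 𝔰 τ * gammaT U γ τ z) ∂μ) := by
  have := countable_of_orthonormal e.orthonormal
  have := hsvm.1
  exact evolved_svm_solves_transport_equation_general e (continuous_sTau 𝔖 𝔰)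
    (isSelfAdjoint_sTau h𝔖 h𝔰) (hVcont g) hU hsvm.2.1.aestronglyMeasurable hsvm.ae_isTraceClass
    hsvm.2.2.1 (hsvm.integrable_mul_traceNorm hmom)
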